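/- For each integer k ≥ 1 the following holds as a polynomial identity in w₁,…,w_{2k−1}, x, y, u, v and ζ: (x−y)·h(u,v)·H_{2(k+1)}(w₁,…,w_{2k−1},x,y,v)·H_{2k}(w₁,…,w_{2k−1},u) + (y−u)·h(x,v)·H_{2(k+1)}(w₁,…,w_{2k−1},y,u,v)·H_{2k}(w₁,…,w_{2k−1},x) + (u−x)·h(y,v)·H_{2(k+1)}(w₁,…,w_{2k−1},u,x,v)·H_{2k}(w₁,…,w_{2k−1},y) = 0. -/

import Mathlib

noncomputable section

open Complex
open scoped BigOperators

/-- Jacobi theta function `ϑ₁(z|τ)` with nome `p = e^{iπτ}` (Whittaker–Watson convention). -/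
def th1 (z τ : ℂ) : ℂ :=
  -Complex.I * ∑' n : ℤ, (-1 : ℂ) ^ n *
    Complex.exp ((Real.pi : ℂ) * Complex.I * τ * ((n : ℂ) + 1/2) ^ 2 + (2 * (n : ℂ) + 1) * Complex.I * z)

/-- Jacobi theta function `ϑ₂(z|τ)`. -/
def th2 (z τ : ℂ) : ℂ :=
  ∑' n : ℤ,
    Complex.exp ((Real.pi : ℂ) * Complex.I * τ * ((n : ℂ) + 1/2) ^ 2 + (2 * (n : ℂ) + 1) * Complex.I * z)

/-- Jacobi theta function `ϑ₃(z|τ)`. -/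
def th3 (z τ : ℂ) : ℂ :=
  ∑' n : ℤ, Complex.exp ((Real.pi : ℂ) * Complex.I * τ * (n : ℂ) ^ 2 + 2 * (n : ℂ) * Complex.I * z)

/-- Jacobi theta function `ϑ₄(z|τ)`. -/
def th4 (z τ : ℂ) : ℂ :=
  ∑' n : ℤ, (-1 : ℂ) ^ n *
    Complex.exp ((Real.pi : ℂ) * Complex.I * τ * (n : ℂ) ^ 2 + 2 * (n : ℂ) * Complex.I * z)

/-- The crossing parameter `η = π/3`. -/
def ηc : ℂ := (Real.pi : ℂ) / 3

/-- The elliptic nome `p = e^{iπτ}`. -/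
def pnome (τ : ℂ) : ℂ := Complex.exp ((Real.pi : ℂ) * Complex.I * τ)

/-- `ζ = (ϑ₁(η,p²)/ϑ₄(η,p²))²`. -/
def zet (τ : ℂ) : ℂ := (th1 ηc (2 * τ) / th4 ηc (2 * τ)) ^ 2

/-- The nome `p` is real with `0 < p < 1`. -/
def preal (τ : ℂ) : Prop := (pnome τ).im = 0 ∧ 0 < (pnome τ).re ∧ (pnome τ).re < 1

/-- A tuple given by a list of prescribed entries, padded by zeros. -/
def padded {n : ℕ} (l : List ℂ) : Fin n → ℂ := fun j => l.getD (j : ℕ) 0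

/-- Extension of a tuple by a list of prescribed further entries (padded by zeros). -/
def extL {m n : ℕ} (w : Fin m → ℂ) (l : List ℂ) : Fin n → ℂ :=
  fun j => if h : (j : ℕ) < m then w ⟨j, h⟩ else l.getD ((j : ℕ) - m) 0

/-- First `k` entries of a `2k`-tuple. -/
def firstHalf {k : ℕ} (x : Fin (2 * k) → ℂ) : Fin k → ℂ :=
  fun i => x ⟨(i : ℕ), by have := i.2; omega⟩

/-- Last `k` entries of a `2k`-tuple. -/
def secondHalf {k : ℕ} (x : Fin (2 * k) → ℂ) : Fin k → ℂ :=
  fun i => x ⟨k + (i : ℕ), by have := i.2; omega⟩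

/-- `𝕙(x,y) = ϑ₁(x−y+η)ϑ₁(x−y−η)ϑ₁(x+y+η)ϑ₁(x+y−η)`. -/
def hh (τ x y : ℂ) : ℂ :=
  th1 (x - y + ηc) τ * th1 (x - y - ηc) τ * th1 (x + y + ηc) τ * th1 (x + y - ηc) τ

/-- `𝔻(x₁,…,x_k) = ∏_{i<j} ϑ₁(x_j−x_i)ϑ₁(x_j+x_i)`. -/
def vdTheta (τ : ℂ) {k : ℕ} (y : Fin k → ℂ) : ℂ :=
  ∏ i : Fin k, ∏ j : Fin k, if i < j then th1 (y j - y i) τ * th1 (y j + y i) τ else 1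

/-- The elliptic Tsuchiya determinant `ℍ_{2k}(x₁,…,x_k; x_{k+1},…,x_{2k})`. -/
def tsuchiya (τ : ℂ) (k : ℕ) (x : Fin (2 * k) → ℂ) : ℂ :=
  (∏ i : Fin k, ∏ j : Fin k, hh τ (firstHalf x i) (secondHalf x j))
    / (vdTheta τ (firstHalf x) * vdTheta τ (secondHalf x))
    * Matrix.det (Matrix.of fun i j : Fin k => (hh τ (firstHalf x i) (secondHalf x j))⁻¹)

/-- The expression defining the elliptic Tsuchiya determinant is well defined:
the Vandermonde-type denominators and the entries `𝕙(x_i,x_{j+k})` are nonzero. -/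
def tsuDefined (τ : ℂ) (k : ℕ) (x : Fin (2 * k) → ℂ) : Prop :=
  (∀ i j : Fin k, i ≠ j →
    th1 (firstHalf x j - firstHalf x i) τ ≠ 0 ∧ th1 (firstHalf x j + firstHalf x i) τ ≠ 0) ∧
  (∀ i j : Fin k, i ≠ j →
    th1 (secondHalf x j - secondHalf x i) τ ≠ 0 ∧ th1 (secondHalf x j + secondHalf x i) τ ≠ 0) ∧
  (∀ i j : Fin k, hh τ (firstHalf x i) (secondHalf x j) ≠ 0)

/-- `h(w,w') = 1 − (3+ζ²)ww' + (1−ζ²)ww'(w+w')`. -/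
def hpol (ζ w w' : ℂ) : ℂ := 1 - (3 + ζ ^ 2) * w * w' + (1 - ζ ^ 2) * w * w' * (w + w')

/-- Vandermonde product `Δ(w₁,…,w_k) = ∏_{i<j}(w_j − w_i)`. -/
def vdm {k : ℕ} (y : Fin k → ℂ) : ℂ :=
  ∏ i : Fin k, ∏ j : Fin k, if i < j then y j - y i else 1

/-- The determinant-ratio expression defining the polynomial `H_{2k}`. -/
def Hratio (ζ : ℂ) (k : ℕ) (w : Fin (2 * k) → ℂ) : ℂ :=
  (∏ i : Fin k, ∏ j : Fin k, hpol ζ (firstHalf w i) (secondHalf w j))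
    / (vdm (firstHalf w) * vdm (secondHalf w))
    * Matrix.det (Matrix.of fun i j : Fin k => (hpol ζ (firstHalf w i) (secondHalf w j))⁻¹)

/-- The expression `Hratio` is well defined at `w`. -/
def HratioDefined (ζ : ℂ) (k : ℕ) (w : Fin (2 * k) → ℂ) : Prop :=
  (∀ i j : Fin k, i ≠ j → firstHalf w i ≠ firstHalf w j) ∧
  (∀ i j : Fin k, i ≠ j → secondHalf w i ≠ secondHalf w j) ∧
  (∀ i j : Fin k, hpol ζ (firstHalf w i) (secondHalf w j) ≠ 0)

/-- `H` is the family of Rosengren–Zinn-Justin polynomials `H_{2k}` for parameter `ζ`: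
for each `k`, `H k` is a polynomial function of the `2k` variables agreeing with the
determinant-ratio formula wherever the latter is defined, and `H 0 = 1`. -/
def IsHFamily (ζ : ℂ) (H : (k : ℕ) → (Fin (2 * k) → ℂ) → ℂ) : Prop :=
  (∀ w, H 0 w = 1) ∧
  (∀ k : ℕ, ∃ P : MvPolynomial (Fin (2 * k)) ℂ, ∀ w, H k w = MvPolynomial.eval w P) ∧
  (∀ (k : ℕ) (w : Fin (2 * k) → ℂ), HratioDefined ζ k w → H k w = Hratio ζ k w)

/-- Vertex weight `a(u)`. -/
def av (τ u : ℂ) : ℂ := th4 (2*ηc) (2*τ) * th1 (u + 2*ηc) (2*τ) * th4 u (2*τ)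
/-- Vertex weight `b(u)`. -/
def bv (τ u : ℂ) : ℂ := th4 (2*ηc) (2*τ) * th4 (u + 2*ηc) (2*τ) * th1 u (2*τ)
/-- Vertex weight `c(u)`. -/
def cv (τ u : ℂ) : ℂ := th1 (2*ηc) (2*τ) * th4 (u + 2*ηc) (2*τ) * th4 u (2*τ)
/-- Vertex weight `d(u)`. -/
def dv (τ u : ℂ) : ℂ := th1 (2*ηc) (2*τ) * th1 (u + 2*ηc) (2*τ) * th1 u (2*τ)
/-- `r(u) = a(u) + b(u)`. -/
def rv (τ u : ℂ) : ℂ := av τ u + bv τ u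

/-- Entries of the `R`-matrix of the eight-vertex model, in the basis `{↑↑,↑↓,↓↑,↓↓}`
identified with `Fin 2 × Fin 2` (`↑ = 0`, `↓ = 1`). -/
def Rent (τ u : ℂ) (p q : Fin 2 × Fin 2) : ℂ :=
  if p = q then (if p.1 = p.2 then av τ u else bv τ u)
  else if q = (p.2, p.1) then cv τ u
  else if p.1 = p.2 ∧ q.1 = q.2 then dv τ u
  else 0

/-- Entries of `Ř(u) = 𝒫 R(u)`. -/
def Rcheckent (τ u : ℂ) (p q : Fin 2 × Fin 2) : ℂ := Rent τ u (p.2, p.1) q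

/-- The boundary vector `χ(x) ∈ ℂ²⊗ℂ²`. -/
def chiV (τ lam x : ℂ) : Fin 2 × Fin 2 → ℂ := fun p =>
  if p = ((0 : Fin 2), (1 : Fin 2)) then th1 (x + lam) (2*τ) * th4 (x - lam - 2*ηc) (2*τ)
  else if p = ((1 : Fin 2), (0 : Fin 2)) then th1 (x - lam - 2*ηc) (2*τ) * th4 (x + lam) (2*τ)
  else 0

/-- The boundary vector `χ̄(x) ∈ ℂ²⊗ℂ²`. -/
def chibarV (τ lam x : ℂ) : Fin 2 × Fin 2 → ℂ := fun p =>
  if p = ((0 : Fin 2), (0 : Fin 2)) then th1 (x + lam) (2*τ) * th1 (x - lam - 2*ηc) (2*τ)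
  else if p = ((1 : Fin 2), (1 : Fin 2)) then th4 (x - lam - 2*ηc) (2*τ) * th4 (x + lam) (2*τ)
  else 0

/-- A family `Ψ_n(u₁,…,u_{2n+1}) ∈ (ℂ²)^{⊗(2n+1)}`, represented by its components
with respect to spin configurations `α : Fin (2n+1) → Fin 2` (`↑ = 0`, `↓ = 1`). -/
abbrev PsiFam := (n : ℕ) → (Fin (2 * n + 1) → ℂ) → (Fin (2 * n + 1) → Fin 2) → ℂ

/-- The action of `Ř(u)` on tensor factors `i`, `j` of `(ℂ²)^{⊗L}`. -/
def applyRc (τ u : ℂ) {L : ℕ} (i j : Fin L) (ψ : (Fin L → Fin 2) → ℂ) :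
    (Fin L → Fin 2) → ℂ := fun α =>
  ∑ s : Fin 2, ∑ t : Fin 2,
    Rcheckent τ u (α i, α j) (s, t) * ψ (Function.update (Function.update α i s) j t)

/-- Spin flip. -/
def flipS : Fin 2 → Fin 2 := fun s => if s = 0 then 1 else 0

/-- Components of the singlet `s = ↑↓ − ↓↑`. -/
def singletC : Fin 2 → Fin 2 → ℂ := fun s t =>
  if s = 0 ∧ t = 1 then 1 else if s = 1 ∧ t = 0 then -1 else 0

/-- Delete the entries at positions `i`, `i+1` from a tuple. -/
def delTwo {α : Type*} {n : ℕ} (i : ℕ) (u : Fin (2 * (n + 1) + 1) → α) : Fin (2 * n + 1) → α :=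
  fun j => if _h : (j : ℕ) < i then u ⟨j, by have := j.2; omega⟩
           else u ⟨(j : ℕ) + 2, by have := j.2; omega⟩

/-- The components of `Ψ_n` are entire functions of each `u_i`. -/
def PsiEntire (Ψ : PsiFam) : Prop :=
  ∀ (n : ℕ) (u : Fin (2*n+1) → ℂ) (i : Fin (2*n+1)) (α : Fin (2*n+1) → Fin 2),
    Differentiable ℂ fun z => Ψ n (Function.update u i z) α

/-- (P1): the exchange relations. -/
def PsiP1 (τ : ℂ) (Ψ : PsiFam) : Prop :=
  ∀ (n : ℕ) (u : Fin (2*n+1) → ℂ) (i j : Fin (2*n+1)), (j : ℕ) = (i : ℕ) + 1 →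
    applyRc τ (u j - u i) i j (Ψ n u)
      = fun α => rv τ (u j - u i) * Ψ n (fun l => u (Equiv.swap i j l)) α

/-- (P2): local spin flips. -/
def PsiP2 (τ : ℂ) (Ψ : PsiFam) : Prop :=
  ∀ (n : ℕ) (u : Fin (2*n+1) → ℂ) (i : Fin (2*n+1)) (α : Fin (2*n+1) → Fin 2),
    Ψ n u (Function.update α i (flipS (α i)))
      = (-(pnome τ)) ^ n * Complex.exp (-Complex.I * ∑ j, (u j - u i))
        * Ψ n (Function.update u i (u i + Real.pi * τ)) α

/-- (P3): quasi-periodicity of `Ψ_n` in each `u_i`. -/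
def PsiP3 (τ : ℂ) (Ψ : PsiFam) : Prop :=
  ∀ (n : ℕ) (u : Fin (2*n+1) → ℂ) (i : Fin (2*n+1)),
    (Ψ n (Function.update u i (u i + Real.pi))
      = fun α => (∏ j ∈ Finset.univ.erase i, (if α j = 0 then (1:ℂ) else -1)) * Ψ n u α) ∧
    (Ψ n (Function.update u i (u i + 2 * Real.pi * τ))
      = fun α => (pnome τ ^ (4*n))⁻¹ *
          Complex.exp (-2 * Complex.I * ∑ j, (u i - u j)) * Ψ n u α)

/-- (P4): the wheel condition. -/
def PsiP4 (Ψ : PsiFam) : Prop :=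
  ∀ (n : ℕ) (u : Fin (2*n+1) → ℂ),
    (∃ i j k : Fin (2*n+1), i < j ∧ j < k ∧ u j = u i + 2*ηc ∧ u k = u i + 4*ηc) →
    Ψ n u = 0

/-- (P5): the reduction relations. -/
def PsiP5 (τ : ℂ) (Ψ : PsiFam) : Prop :=
  ∀ (n : ℕ) (u : Fin (2*(n+1)+1) → ℂ) (i : ℕ) (hi : i + 1 < 2*(n+1)+1),
    u ⟨i+1, hi⟩ = u ⟨i, by omega⟩ + 2*ηc →
    Ψ (n+1) u = fun α =>
      (∏ j ∈ (Finset.univ.erase (⟨i, by omega⟩ : Fin (2*(n+1)+1))).erase ⟨i+1, hi⟩,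
          th1 (u ⟨i, by omega⟩ - u j - 2*ηc) τ)
        * singletC (α ⟨i, by omega⟩) (α ⟨i+1, hi⟩)
        * Ψ n (delTwo i u) (delTwo i α)

/-- (P6): `Ψ₀ = ↑ + ↓`. -/
def PsiP6 (Ψ : PsiFam) : Prop := ∀ u α, Ψ 0 u α = 1

/-- The inhomogeneity parameters `(x₁,−x₁,…,x_n,−x_n,0)`. -/
def interleave {n : ℕ} (x : Fin n → ℂ) : Fin (2*n+1) → ℂ := fun j =>
  if h : (j : ℕ) < 2*n then
    (if (j : ℕ) % 2 = 0 then x ⟨(j:ℕ)/2, by omega⟩ else -x ⟨(j:ℕ)/2, by omega⟩)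
  else 0

/-- Components of `χ(x)`. -/
def chiC (τ lam x : ℂ) (s t : Fin 2) : ℂ :=
  if s = 0 ∧ t = 1 then th1 (x + lam) (2*τ) * th4 (x - lam - 2*ηc) (2*τ)
  else if s = 1 ∧ t = 0 then th1 (x - lam - 2*ηc) (2*τ) * th4 (x + lam) (2*τ)
  else 0

/-- Components of `χ̄(x)`. -/
def chibarC (τ lam x : ℂ) (s t : Fin 2) : ℂ :=
  if s = 0 ∧ t = 0 then th1 (x + lam) (2*τ) * th1 (x - lam - 2*ηc) (2*τ)
  else if s = 1 ∧ t = 1 then th4 (x - lam - 2*ηc) (2*τ) * th4 (x + lam) (2*τ)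
  else 0

/-- The scalar product `Z_n(x₁,…,x_n) = ⟨ξ_n(x₁,…,x_n), Ψ_n(x₁,−x₁,…,x_n,−x_n,0)⟩`. -/
def Zfun (τ lam : ℂ) (Ψ : PsiFam) (n : ℕ) (x : Fin n → ℂ) : ℂ :=
  ∑ α : Fin (2*n+1) → Fin 2,
    (∏ m : Fin n, chiC τ lam (x m)
        (α ⟨2*(m:ℕ), by have := m.2; omega⟩) (α ⟨2*(m:ℕ)+1, by have := m.2; omega⟩))
      * (if α ⟨2*n, by omega⟩ = 0 then (1:ℂ) else 0)
      * Ψ n (interleave x) α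

/-- The scalar product `Z̄_n^±(x₁,…,x_n)`, with `ε = ±1`. -/
def Zbarfun (τ lam ε : ℂ) (Ψ : PsiFam) (n : ℕ) (x : Fin n → ℂ) : ℂ :=
  ∑ α : Fin (2*n+1) → Fin 2,
    (∏ m : Fin n, chibarC τ lam (x m)
        (α ⟨2*(m:ℕ), by have := m.2; omega⟩) (α ⟨2*(m:ℕ)+1, by have := m.2; omega⟩))
      * (if α ⟨2*n, by omega⟩ = 0 then (1:ℂ) else ε)
      * Ψ n (interleave x) α

/-- The normalisation constant `𝒩_n`. -/
def Ncoef (τ : ℂ) (n : ℕ) : ℂ :=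
  (-1 : ℂ) ^ ((n+1)/2) * (th1 ηc τ ^ (n^2))⁻¹ * (th4 0 (2*τ) / th4 ηc (2*τ)) ^ (n*(n+1)/2)

/-- The vector `ψ_n = 𝒩_n Ψ_n(0,…,0)`. -/
def psiH (τ : ℂ) (Ψ : PsiFam) (n : ℕ) (α : Fin (2*n+1) → Fin 2) : ℂ :=
  Ncoef τ n * Ψ n (fun _ => 0) α

/-- The scalar product `S_n(μ) = ((⟨↑↓| + μ⟨↓↑|)^{⊗n} ⊗ ⟨↑|) ψ_n`. -/
def Sfun (τ : ℂ) (Ψ : PsiFam) (n : ℕ) (μ : ℂ) : ℂ :=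
  ∑ α : Fin (2*n+1) → Fin 2,
    (∏ m : Fin n,
      (if α ⟨2*(m:ℕ), by have := m.2; omega⟩ = 0 ∧ α ⟨2*(m:ℕ)+1, by have := m.2; omega⟩ = 1
        then (1:ℂ)
       else if α ⟨2*(m:ℕ), by have := m.2; omega⟩ = 1 ∧ α ⟨2*(m:ℕ)+1, by have := m.2; omega⟩ = 0
        then μ
       else 0))
      * (if α ⟨2*n, by omega⟩ = 0 then (1:ℂ) else 0) * psiH τ Ψ n α

/-- The scalar product `S̄_n^±(ν) = ((⟨↑↑| + ν⟨↓↓|)^{⊗n} ⊗ (⟨↑| ± ⟨↓|)) ψ_n`, with `ε = ±1`. -/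
def Sbarfun (τ ε : ℂ) (Ψ : PsiFam) (n : ℕ) (ν : ℂ) : ℂ :=
  ∑ α : Fin (2*n+1) → Fin 2,
    (∏ m : Fin n,
      (if α ⟨2*(m:ℕ), by have := m.2; omega⟩ = 0 ∧ α ⟨2*(m:ℕ)+1, by have := m.2; omega⟩ = 0
        then (1:ℂ)
       else if α ⟨2*(m:ℕ), by have := m.2; omega⟩ = 1 ∧ α ⟨2*(m:ℕ)+1, by have := m.2; omega⟩ = 1
        then ν
       else 0))
      * (if α ⟨2*n, by omega⟩ = 0 then (1:ℂ) else ε) * psiH τ Ψ n α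

/-- The alternating spin configuration `↑↓↑↓⋯↑`. -/
def altConf {L : ℕ} : Fin L → Fin 2 := fun j => if (j : ℕ) % 2 = 0 then 0 else 1

/-- The fully polarised spin configuration `↓⋯↓`. -/
def downConf {L : ℕ} : Fin L → Fin 2 := fun _ => 1

/-- The spin configuration `↑⋯↑↓` with a single `↓` at the last site. -/
def lastDownConf {n : ℕ} : Fin (2*n+1) → Fin 2 := fun j => if (j : ℕ) = 2*n then 1 else 0

/-- `J₂ = −1/2`. -/
def J2c : ℂ := -(1/2)
/-- `J₃ = 1/(1+ζ)`. -/
def J3c (ζ : ℂ) : ℂ := 1/(1+ζ)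
/-- `J₄ = 1/(1−ζ)`. -/
def J4c (ζ : ℂ) : ℂ := 1/(1-ζ)
/-- `μ̄ = (μ−1)²/((ζ²−1)μ)`. -/
def mubar (ζ μ : ℂ) : ℂ := (μ - 1)^2 / ((ζ^2 - 1)*μ)
/-- `ν̄ = (ν−ζ)(νζ−1)/((ζ²−1)ν)`. -/
def nubar (ζ ν : ℂ) : ℂ := (ν - ζ)*(ν*ζ - 1) / ((ζ^2 - 1)*ν)

/-- The elliptic function `w(x)`. -/
def wfun (τ x : ℂ) : ℂ :=
  th4 ηc (2*τ) / th4 0 (2*τ) * th1 x τ ^ 2 / (th1 (x - ηc) τ * th1 (x + ηc) τ)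

/-- `β₂ = η + π/2`. -/
def β2c : ℂ := ηc + (Real.pi : ℂ)/2
/-- `β₃ = η + π/2 + πτ/2`. -/
def β3c (τ : ℂ) : ℂ := ηc + (Real.pi : ℂ)/2 + (Real.pi : ℂ)*τ/2
/-- `β₄ = η + πτ/2`. -/
def β4c (τ : ℂ) : ℂ := ηc + (Real.pi : ℂ)*τ/2

/-- `f` is an (even) theta function of degree `m`, nome `p = e^{iπτ}` and norm `0`
with respect to each of its variables. -/
def ThetaLike (τ : ℂ) (m : ℕ) {n : ℕ} (X : (Fin n → ℂ) → ℂ) : Prop :=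
  ∀ (x : Fin n → ℂ) (i : Fin n),
    Differentiable ℂ (fun z => X (Function.update x i z)) ∧
    (∀ z, X (Function.update x i (z + Real.pi)) = X (Function.update x i z)) ∧
    (∀ z, X (Function.update x i (z + Real.pi * τ))
        = ((-(pnome τ)) ^ m)⁻¹ * Complex.exp (-2 * Complex.I * ((m : ℂ) * z))
            * X (Function.update x i z)) ∧
    (∀ z, X (Function.update x i (-z)) = X (Function.update x i z))

/-!
The starting point is `(w' - w) * h(w, w') = w * w' * (f(w') - f(w))` with
`f(w) = (1 - ζ²) * w² - (3 + ζ²) * w - 1 / w`. Up to row and column factors, the matrix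
`1 / h(wᵢ, wⱼ₊ₖ)` is therefore Cauchy-like, with entries
`(wⱼ₊ₖ - wᵢ) / (f(wⱼ₊ₖ) - f(wᵢ))`. By Lagrange interpolation its determinant is, up to explicit
factors, that of the matrix with rows `(1, f, …, f ^ (k - 1), w, w * f, …, w * f ^ (k - 1))`, one
for each of the `2k` variables, so `H₂ₖ` is a quotient of two alternating functions and is
symmetric. The variables may thus be distributed over the two halves at will. With `v` in the first
half of the larger factors and `x`, `y`, `u` always in the second half, the prefactors of the three
products agree, and the identity is the three-term Plücker relation for minors of `1 / h`. It
extends from generic to arbitrary variables by density.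
-/

section KernelDeterminants

open Matrix

variable {R α β : Type*} [CommRing R]

theorem sum_neg_one_pow_mul_det_submatrix_succAbove {n : ℕ} (A : Matrix (Fin n) (Fin (n + 1)) R)
    (i : Fin n) :
    ∑ j : Fin (n + 1), (-1) ^ (j : ℕ) * A i j * (A.submatrix id j.succAbove).det = 0 := by
  have hrow : (of (vecCons (A i) A)).det = 0 :=
    det_zero_of_row_eq (Fin.succ_ne_zero i).symm rfl
  rw [← hrow, det_succ_row_zero]
  rfl

/-- The determinant of the square matrix with entries `K (a i) (b j)`. -/
def kernelDet (K : α → β → R) {n : ℕ} (a : Fin n → α) (b : Fin n → β) : R :=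
  (of fun i j => K (a i) (b j)).det

theorem kernelDet_vecCons_right (K : α → β → R) {n : ℕ} (a : Fin (n + 1) → α) (t : β)
    (b : Fin n → β) :
    kernelDet K a (vecCons t b) =
      ∑ i : Fin (n + 1), (-1) ^ (i : ℕ) * K (a i) t * kernelDet K (a ∘ i.succAbove) b :=
  det_succ_column_zero _

theorem kernelDet_vecCons_apply_self (K : α → β → R) {n : ℕ} (a : Fin (n + 1) → α)
    (b : Fin n → β) (j : Fin n) : kernelDet K a (vecCons (b j) b) = 0 :=
  det_zero_of_column_eq (Fin.succ_ne_zero j).symm fun _ => rfl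

/-- Expanding the factor `kernelDet K a (vecCons (d j) b)` along its first column turns the sum into
a combination of the relations satisfied by the maximal minors of the rows `v :: a` and columns
`d`. -/
theorem kernelDet_plucker (K : α → β → R) {m : ℕ} (v : α) (a : Fin (m + 1) → α)
    (b : Fin m → β) (d : Fin (m + 3) → β) :
    ∑ j : Fin (m + 3), (-1) ^ (j : ℕ) * kernelDet K a (vecCons (d j) b) *
      kernelDet K (vecCons v a) (d ∘ j.succAbove) = 0 := by
  have hminor : ∀ i : Fin (m + 1), ∑ j : Fin (m + 3), (-1) ^ (j : ℕ) * K (a i) (d j) *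
      kernelDet K (vecCons v a) (d ∘ j.succAbove) = 0 := fun i =>
    sum_neg_one_pow_mul_det_submatrix_succAbove (of fun i j => K (vecCons v a i) (d j)) i.succ
  simp only [kernelDet_vecCons_right, Finset.mul_sum, Finset.sum_mul]
  rw [Finset.sum_comm]
  refine Finset.sum_eq_zero fun i _ => ?_
  rw [← mul_zero ((-1) ^ (i : ℕ) * kernelDet K (a ∘ i.succAbove) b), ← hminor i,
    Finset.mul_sum]
  exact Finset.sum_congr rfl fun j _ => by ring

theorem vecCons_comp_succ_succAbove {n : ℕ} (x : β) (b : Fin (n + 1) → β) (j : Fin (n + 1)) :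
    vecCons x b ∘ j.succ.succAbove = vecCons x (b ∘ j.succAbove) :=
  Fin.cons_comp_succ_succAbove x b j

theorem kernelDet_three_term (K : α → β → R) {m : ℕ} (v : α) (a : Fin (m + 1) → α)
    (x y u : β) (b : Fin m → β) :
    kernelDet K (vecCons v a) (vecCons x (vecCons y b)) * kernelDet K a (vecCons u b) +
      kernelDet K (vecCons v a) (vecCons y (vecCons u b)) * kernelDet K a (vecCons x b) =
      kernelDet K (vecCons v a) (vecCons x (vecCons u b)) * kernelDet K a (vecCons y b) := by
  have hsucc : ∀ {n : ℕ} (t : β) (c : Fin n → β), vecCons t c ∘ Fin.succ = c := fun _ _ => rfl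
  have h := kernelDet_plucker K v a b (vecCons x (vecCons y (vecCons u b)))
  simp only [Fin.sum_univ_succ (n := m + 2), Fin.sum_univ_succ (n := m + 1),
    Fin.sum_univ_succ (n := m), cons_val_succ, cons_val_zero, kernelDet_vecCons_apply_self,
    mul_zero, zero_mul, Finset.sum_const_zero] at h
  simp only [vecCons_comp_succ_succAbove, Fin.succAbove_zero, hsucc, Fin.val_zero,
    Fin.val_succ] at h
  linear_combination h

end KernelDeterminants

section CauchyLike

open Matrix Polynomial

/-- The matrix with rows `(1, f i, …, f i ^ (k - 1), x i, x i * f i, …, x i * f i ^ (k - 1))`. For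
square matrices of this shape the determinant is alternating in the pairs `(f i, x i)`. -/
def doubledVandermonde {R ι : Type*} [CommRing R] (k : ℕ) (f x : ι → R) :
    Matrix ι (Fin k ⊕ Fin k) R :=
  of fun i => Sum.elim (fun j => f i ^ (j : ℕ)) (fun j => x i * f i ^ (j : ℕ))

theorem doubledVandermonde_sumElim {R : Type*} [CommRing R] {k : ℕ} (a b x y : Fin k → R) :
    doubledVandermonde k (Sum.elim a b) (Sum.elim x y) =
      fromBlocks (vandermonde a) (diagonal x * vandermonde a)
        (vandermonde b) (diagonal y * vandermonde b) := by
  ext (i | i) (j | j) <;> simp [doubledVandermonde, vandermonde_apply]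

theorem prod_prod_erase_sub_eq_det_vandermonde_sq {R : Type*} [CommRing R] {k : ℕ}
    (a : Fin k → R) :
    ∏ i, ∏ j ∈ Finset.univ.erase i, (a i - a j) =
      (-1) ^ (k * (k - 1) / 2) * (vandermonde a).det ^ 2 := by
  have hcard : ∑ i : Fin k, (Finset.Ioi i).card = k * (k - 1) / 2 := by
    simp only [Fin.card_Ioi]
    rw [Fin.sum_univ_eq_sum_range fun i => k - 1 - i,
      Finset.sum_range_reflect (fun i => i), Finset.sum_range_id]
  calc ∏ i, ∏ j ∈ Finset.univ.erase i, (a i - a j)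
      = ∏ i, ∏ j ∈ Finset.Ioi i, (a i - a j) * (a j - a i) := by
        simp only [Finset.prod_prod_Ioi_mul_eq_prod_prod_off_diag fun j i => a i - a j,
          ← Finset.compl_singleton]
    _ = ∏ i, ∏ j ∈ Finset.Ioi i, -1 * (a j - a i) ^ 2 :=
        Finset.prod_congr rfl fun i _ => Finset.prod_congr rfl fun j _ => by ring
    _ = _ := by
        simp only [Finset.prod_mul_distrib, Finset.prod_const, Finset.prod_pow_eq_pow_sum,
          hcard, det_vandermonde, Finset.prod_pow]

variable {F : Type*} [Field F] {k : ℕ} {a b : Fin k → F}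

theorem lagrangeBasis_mul_vandermonde (ha : Function.Injective a) :
    (of fun i j => (Lagrange.basis Finset.univ a j).eval (b i)) * vandermonde a =
      vandermonde b := by
  ext i l
  have hdeg : (X ^ (l : ℕ) : F[X]).degree < (Finset.univ : Finset (Fin k)).card := by
    rw [degree_X_pow, Finset.card_univ, Fintype.card_fin]
    exact_mod_cast l.isLt
  have h := congrArg (eval (b i)) (Lagrange.eq_interpolate ha.injOn hdeg)
  simp only [Lagrange.interpolate_apply, eval_finsetSum, eval_mul, eval_C, eval_pow,
    eval_X] at h
  simp only [mul_apply, of_apply, vandermonde_apply, h, mul_comm]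

theorem prod_nodalWeight_mul_det_vandermonde_sq (ha : Function.Injective a) :
    (∏ j, Lagrange.nodalWeight Finset.univ a j) * (vandermonde a).det ^ 2 =
      (-1) ^ (k * (k - 1) / 2) := by
  have hne : (vandermonde a).det ≠ 0 := det_vandermonde_ne_zero_iff.mpr ha
  simp only [Lagrange.nodalWeight, Finset.prod_inv_distrib,
    prod_prod_erase_sub_eq_det_vandermonde_sq]
  rw [mul_inv, mul_assoc, inv_mul_cancel₀ (pow_ne_zero 2 hne), mul_one, ← inv_pow, inv_neg_one]

theorem det_doubledVandermonde_sumElim (ha : Function.Injective a) (hab : ∀ i j, b j ≠ a i)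
    (x y : Fin k → F) :
    (doubledVandermonde k (Sum.elim a b) (Sum.elim x y)).det =
      (-1) ^ (k * (k - 1) / 2) * (∏ i, ∏ j, (b j - a i)) *
        (of fun i j => (y j - x i) / (b j - a i)).det := by
  set W : Matrix (Fin k) (Fin k) F :=
    of fun i j => (Lagrange.basis Finset.univ a j).eval (b i) with hW
  have hfac : doubledVandermonde k (Sum.elim a b) (Sum.elim x y) =
      fromBlocks 1 (diagonal x) W (diagonal y * W) *
        fromBlocks (vandermonde a) 0 0 (vandermonde a) := by
    rw [doubledVandermonde_sumElim, fromBlocks_multiply]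
    simp only [Matrix.mul_assoc, lagrangeBasis_mul_vandermonde ha, hW, Matrix.one_mul,
      Matrix.mul_zero, add_zero, zero_add]
  set C : Matrix (Fin k) (Fin k) F := of fun i j => (y j - x i) / (b j - a i) with hC
  have hschur : diagonal y * W - W * diagonal x =
      of fun i j => Lagrange.nodalWeight Finset.univ a j *
        (of fun i j => (∏ l, (b i - a l)) * Cᵀ i j) i j := by
    ext i j
    rw [Matrix.sub_apply, diagonal_mul, mul_diagonal, hW, of_apply, of_apply, of_apply,
      Lagrange.eval_basis_not_at_node (Finset.mem_univ j) (hab j i), Lagrange.eval_nodal,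
      transpose_apply, hC, of_apply]
    ring
  rw [hfac, det_mul, det_fromBlocks_one₁₁, det_fromBlocks_zero₂₁, hschur,
    det_mul_row, det_mul_column, det_transpose, Finset.prod_comm,
    ← prod_nodalWeight_mul_det_vandermonde_sq ha]
  ring

end CauchyLike

section Entries

/-- The multiset of entries of a tuple. -/
def entries {ι α : Type*} [Fintype ι] (w : ι → α) : Multiset α := Finset.univ.val.map w

variable {ι κ α : Type*} [Fintype ι] [Fintype κ]

theorem exists_perm_of_entries_eq {w w' : ι → α} (h : entries w = entries w') :
    ∃ σ : Equiv.Perm ι, w = w' ∘ σ := by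
  classical
  have hcard : ∀ z, Fintype.card {i // w i = z} = Fintype.card {i // w' i = z} := fun z => by
    have := congrArg (Multiset.count z) h
    simp only [entries, Multiset.count_map] at this
    rw [Fintype.card_subtype, Fintype.card_subtype]
    simpa [Finset.card_def, eq_comm] using this
  let e : ι ≃ ι := Equiv.ofFiberEquiv fun z => Fintype.equivOfCardEq (hcard z)
  exact ⟨e, funext fun i => (Equiv.ofFiberEquiv_map _ i).symm⟩

theorem mem_entries_apply (w : ι → α) (i : ι) : w i ∈ entries w :=
  Multiset.mem_map_of_mem w (Finset.mem_univ i)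

theorem nodup_entries_iff {w : ι → α} : (entries w).Nodup ↔ Function.Injective w :=
  (Multiset.nodup_map_iff_inj_on Finset.univ.nodup).trans <| by
    simp [Function.Injective]

theorem entries_comp_equiv (w : ι → α) (e : κ ≃ ι) : entries (w ∘ e) = entries w := by
  rw [entries, ← Multiset.map_map, entries]
  congr 1
  exact congrArg Finset.val (Finset.map_univ_equiv e)

theorem entries_sumElim (a : ι → α) (b : κ → α) :
    entries (Sum.elim a b) = entries a + entries b := by
  simp [entries, ← Finset.univ_disjSum_univ, Finset.disjSum, Multiset.disjSum, Multiset.map_map]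

theorem entries_vecCons {n : ℕ} (x : α) (a : Fin n → α) :
    entries (Matrix.vecCons x a) = x ::ₘ entries a := by
  simp only [entries, Fin.univ_val_map, Matrix.vecCons, List.ofFn_cons, Multiset.cons_coe]

theorem entries_extL {m n : ℕ} (w : Fin m → ℂ) (l : List ℂ) (h : n = m + l.length) :
    entries (extL w l : Fin n → ℂ) = entries w + l := by
  subst h
  simp only [entries, Fin.univ_val_map, Multiset.coe_add]
  congr 1
  refine List.ext_getElem (by simp) fun i h₁ h₂ => ?_
  rw [List.length_append, List.length_ofFn] at h₂
  by_cases hi : i < m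
  · simp [extL, hi]
  · rw [List.getElem_append_right (by simpa using hi)]
    simp [extL, hi, List.getElem?_eq_getElem (show i - m < l.length by omega)]

/-- The identification of two blocks of `k` indices with the first and the last `k` indices of a
`2k`-tuple. -/
def halvesEquiv (k : ℕ) : Fin k ⊕ Fin k ≃ Fin (2 * k) :=
  finSumFinEquiv.trans (finCongr (two_mul k).symm)

theorem comp_halvesEquiv {k : ℕ} (w : Fin (2 * k) → ℂ) :
    w ∘ halvesEquiv k = Sum.elim (firstHalf w) (secondHalf w) := by
  funext i
  cases i <;> rfl

theorem exists_halves_eq {k : ℕ} (a b : Fin k → ℂ) :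
    ∃ w : Fin (2 * k) → ℂ, firstHalf w = a ∧ secondHalf w = b := by
  have h := comp_halvesEquiv (Sum.elim a b ∘ (halvesEquiv k).symm)
  rw [Function.comp_assoc, Equiv.symm_comp_self, Function.comp_id] at h
  exact ⟨Sum.elim a b ∘ (halvesEquiv k).symm, funext fun i => (congrFun h (.inl i)).symm,
    funext fun i => (congrFun h (.inr i)).symm⟩

end Entries

section Symmetry

open Matrix

theorem vdm_eq_det_vandermonde {k : ℕ} (y : Fin k → ℂ) : vdm y = (vandermonde y).det := by
  rw [det_vandermonde, vdm]
  refine Finset.prod_congr rfl fun i _ => ?_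
  rw [← Finset.prod_filter]
  congr 1
  ext j
  simp

theorem vdm_ne_zero {k : ℕ} {y : Fin k → ℂ} (hy : Function.Injective y) : vdm y ≠ 0 :=
  vdm_eq_det_vandermonde y ▸ det_vandermonde_ne_zero_iff.mpr hy

theorem vdm_comp_perm {k : ℕ} (y : Fin k → ℂ) (σ : Equiv.Perm (Fin k)) :
    vdm (y ∘ σ) = Equiv.Perm.sign σ * vdm y := by
  rw [vdm_eq_det_vandermonde, vdm_eq_det_vandermonde, ← det_permute]
  rfl

theorem vdm_eq_vdm_halves {k : ℕ} (w : Fin (2 * k) → ℂ) :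
    vdm w = vdm (firstHalf w) * vdm (secondHalf w) *
      ∏ i, ∏ j, (secondHalf w j - firstHalf w i) := by
  have hl : ∀ i, w (halvesEquiv k (.inl i)) = firstHalf w i := fun _ => rfl
  have hr : ∀ i, w (halvesEquiv k (.inr i)) = secondHalf w i := fun _ => rfl
  have hll : ∀ i j, halvesEquiv k (.inl i) < halvesEquiv k (.inl j) ↔ i < j := fun _ _ => Iff.rfl
  have hrr : ∀ i j, halvesEquiv k (.inr i) < halvesEquiv k (.inr j) ↔ i < j := fun _ _ =>
    Nat.add_lt_add_iff_left
  have hlr : ∀ i j, halvesEquiv k (.inl i) < halvesEquiv k (.inr j) := fun i _ =>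
    Nat.lt_add_right _ i.isLt
  have hrl : ∀ i j, ¬ halvesEquiv k (.inr i) < halvesEquiv k (.inl j) := fun i j =>
    (hlr j i).not_gt
  simp only [vdm, ← Equiv.prod_comp (halvesEquiv k), Fintype.prod_sum_type, hl, hr, hll, hlr, hrl,
    hrr, if_true, if_false, Finset.prod_mul_distrib, Finset.prod_const_one]
  ring

/-- The coordinate in which the polynomial `hpol ζ` becomes a divided difference. -/
def cauchyCoord (ζ w : ℂ) : ℂ := (1 - ζ ^ 2) * w ^ 2 - (3 + ζ ^ 2) * w - w⁻¹

theorem sub_mul_hpol (ζ : ℂ) {w w' : ℂ} (hw : w ≠ 0) (hw' : w' ≠ 0) :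
    (w' - w) * hpol ζ w w' = w * w' * (cauchyCoord ζ w' - cauchyCoord ζ w) := by
  simp only [hpol, cauchyCoord]
  field_simp
  ring

theorem hpol_comm (ζ w w' : ℂ) : hpol ζ w w' = hpol ζ w' w := by
  unfold hpol; ring

/-- The values in `s` are in general position: they avoid the zeros and poles of all the factors
that occur in the determinant ratio and in its Cauchy-like form. A repeated value of the multiset
`s` stands for a coincidence of variables. -/
structure IsGeneric (ζ : ℂ) (s : Multiset ℂ) : Prop where
  nodup : s.Nodup
  ne_zero : ∀ x ∈ s, x ≠ 0
  hpol_ne_zero : ∀ x ∈ s, ∀ y ∈ s, hpol ζ x y ≠ 0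

theorem IsGeneric.mono {ζ : ℂ} {s t : Multiset ℂ} (ht : IsGeneric ζ t) (hst : s ≤ t) :
    IsGeneric ζ s where
  nodup := Multiset.nodup_of_le hst ht.nodup
  ne_zero x hx := ht.ne_zero x (Multiset.mem_of_le hst hx)
  hpol_ne_zero x hx y hy :=
    ht.hpol_ne_zero x (Multiset.mem_of_le hst hx) y (Multiset.mem_of_le hst hy)

theorem IsGeneric.cauchyCoord_ne {ζ : ℂ} {s : Multiset ℂ} (hs : IsGeneric ζ s) {x y : ℂ}
    (hx : x ∈ s) (hy : y ∈ s) (hxy : x ≠ y) : cauchyCoord ζ x ≠ cauchyCoord ζ y := fun h => by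
  have := sub_mul_hpol ζ (hs.ne_zero x hx) (hs.ne_zero y hy)
  rw [h, sub_self, mul_zero] at this
  exact mul_ne_zero (sub_ne_zero.mpr hxy.symm) (hs.hpol_ne_zero x hx y hy) this

/-- The square matrix `doubledVandermonde` in the coordinates `cauchyCoord ζ (w i)`, whose
determinant is the alternating numerator of the determinant ratio. -/
def hpolVandermonde (ζ : ℂ) {k : ℕ} (w : Fin (2 * k) → ℂ) : Matrix (Fin (2 * k)) (Fin (2 * k)) ℂ :=
  (doubledVandermonde k (cauchyCoord ζ ∘ w) w).submatrix id (halvesEquiv k).symm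

theorem det_hpolVandermonde_comp_perm (ζ : ℂ) {k : ℕ} (w : Fin (2 * k) → ℂ)
    (σ : Equiv.Perm (Fin (2 * k))) :
    (hpolVandermonde ζ (w ∘ σ)).det = Equiv.Perm.sign σ * (hpolVandermonde ζ w).det :=
  det_permute σ (hpolVandermonde ζ w)

theorem det_hpolVandermonde (ζ : ℂ) {k : ℕ} (w : Fin (2 * k) → ℂ) :
    (hpolVandermonde ζ w).det = (doubledVandermonde k
      (Sum.elim (cauchyCoord ζ ∘ firstHalf w) (cauchyCoord ζ ∘ secondHalf w))
      (Sum.elim (firstHalf w) (secondHalf w))).det := by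
  rw [← det_submatrix_equiv_self (halvesEquiv k), ← Sum.comp_elim, ← comp_halvesEquiv,
    hpolVandermonde, submatrix_submatrix, Equiv.symm_comp_self]
  rfl

theorem prod_mul_det_inv_hpol (ζ : ℂ) {k : ℕ} {a b : Fin k → ℂ} (ha : ∀ i, a i ≠ 0)
    (hb : ∀ j, b j ≠ 0) (hab : ∀ i j, b j ≠ a i) :
    (∏ i, a i) * (∏ j, b j) * (of fun i j => (hpol ζ (a i) (b j))⁻¹).det =
      (of fun i j => (b j - a i) / (cauchyCoord ζ (b j) - cauchyCoord ζ (a i))).det := by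
  have hentry : ∀ i j, (b j - a i) / (cauchyCoord ζ (b j) - cauchyCoord ζ (a i)) =
      a i * (b j * (hpol ζ (a i) (b j))⁻¹) := fun i j => by
    have hne : b j - a i ≠ 0 := sub_ne_zero.mpr (hab i j)
    rw [eq_div_of_mul_eq hne ((mul_comm _ _).trans (sub_mul_hpol ζ (ha i) (hb j))), inv_div]
    have := ha i
    have := hb j
    field_simp
  simp only [hentry]
  rw [mul_assoc, ← det_mul_row, ← det_mul_column]
  rfl

theorem prod_sub_mul_prod_hpol (ζ : ℂ) {k : ℕ} {a b : Fin k → ℂ} (ha : ∀ i, a i ≠ 0)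
    (hb : ∀ j, b j ≠ 0) :
    (∏ i, ∏ j, (b j - a i)) * ∏ i, ∏ j, hpol ζ (a i) (b j) =
      ((∏ i, a i) * ∏ j, b j) ^ k *
        ∏ i, ∏ j, (cauchyCoord ζ (b j) - cauchyCoord ζ (a i)) := by
  simp only [← Finset.prod_mul_distrib, sub_mul_hpol ζ (ha _) (hb _)]
  simp only [Finset.prod_mul_distrib, Finset.prod_const, Finset.card_univ, Fintype.card_fin,
    mul_pow, Finset.prod_pow]

theorem vdm_mul_Hratio {ζ : ℂ} {k : ℕ} {w : Fin (2 * k) → ℂ}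
    (ha : Function.Injective (firstHalf w)) (hb : Function.Injective (secondHalf w)) :
    vdm w * Hratio ζ k w = (∏ i, ∏ j, (secondHalf w j - firstHalf w i)) *
      (∏ i, ∏ j, hpol ζ (firstHalf w i) (secondHalf w j)) *
        (of fun i j => (hpol ζ (firstHalf w i) (secondHalf w j))⁻¹).det := by
  have hne := mul_ne_zero (vdm_ne_zero ha) (vdm_ne_zero hb)
  rw [vdm_eq_vdm_halves, Hratio, mul_right_comm _ (∏ i, ∏ j, (_ - _)), ← mul_assoc,
    mul_div_cancel₀ _ hne]
  ring

theorem prod_mul_vdm_mul_Hratio (ζ : ℂ) {k : ℕ} {w : Fin (2 * k) → ℂ}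
    (hw : IsGeneric ζ (entries w)) :
    (∏ i, w i) * (vdm w * Hratio ζ k w) =
      (-1) ^ (k * (k - 1) / 2) * (∏ i, w i) ^ k * (hpolVandermonde ζ w).det := by
  set a := firstHalf w
  set b := secondHalf w
  have haw : ∀ i, a i ∈ entries w := fun i => mem_entries_apply w _
  have hbw : ∀ i, b i ∈ entries w := fun i => mem_entries_apply w _
  have ha0 : ∀ i, a i ≠ 0 := fun i => hw.ne_zero _ (haw i)
  have hb0 : ∀ i, b i ≠ 0 := fun i => hw.ne_zero _ (hbw i)
  have hinj : Function.Injective (Sum.elim a b) := by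
    rw [← comp_halvesEquiv]
    exact (nodup_entries_iff.mp hw.nodup).comp (halvesEquiv k).injective
  obtain ⟨hainj, hbinj, hab⟩ := Sum.elim_injective.mp hinj
  have hprod : ∏ i, w i = (∏ i, a i) * ∏ i, b i := by
    rw [← Equiv.prod_comp (halvesEquiv k), Fintype.prod_sum_type]
    rfl
  have hcauchy := det_doubledVandermonde_sumElim (a := cauchyCoord ζ ∘ a) (b := cauchyCoord ζ ∘ b)
    (fun i j h => by_contra fun hij => hw.cauchyCoord_ne (haw i) (haw j) (hainj.ne hij) h)
    (fun i j => hw.cauchyCoord_ne (hbw j) (haw i) (hab i j).symm) a b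
  have hsign : ((-1) ^ (k * (k - 1) / 2) * (-1) ^ (k * (k - 1) / 2) : ℂ) = 1 := by
    rw [← mul_pow, neg_one_mul, neg_neg, one_pow]
  rw [vdm_mul_Hratio hainj hbinj, det_hpolVandermonde, hcauchy,
    prod_sub_mul_prod_hpol ζ ha0 hb0, ← hprod]
  simp only [Function.comp_apply]
  rw [← prod_mul_det_inv_hpol ζ ha0 hb0 fun i j => (hab i j).symm, ← hprod]
  linear_combination (-(∏ i, w i) ^ (k + 1) *
    (∏ i, ∏ j, (cauchyCoord ζ (b j) - cauchyCoord ζ (a i))) *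
    (of fun i j => (hpol ζ (a i) (b j))⁻¹).det) * hsign

theorem Hratio_comp_perm (ζ : ℂ) {k : ℕ} {w : Fin (2 * k) → ℂ} (hw : IsGeneric ζ (entries w))
    (σ : Equiv.Perm (Fin (2 * k))) : Hratio ζ k (w ∘ σ) = Hratio ζ k w := by
  have hσ := prod_mul_vdm_mul_Hratio ζ (w := w ∘ σ) ((entries_comp_equiv w σ).symm ▸ hw)
  have hprod : ∏ i, (w ∘ σ) i = ∏ i, w i := Equiv.prod_comp σ w
  rw [hprod, vdm_comp_perm, det_hpolVandermonde_comp_perm] at hσ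
  have hne : (Equiv.Perm.sign σ : ℂ) * ((∏ i, w i) * vdm w) ≠ 0 :=
    mul_ne_zero (by exact_mod_cast (Equiv.Perm.sign σ).ne_zero) <|
      mul_ne_zero (Finset.prod_ne_zero_iff.mpr fun i _ => hw.ne_zero _ (mem_entries_apply w i))
        (vdm_ne_zero (nodup_entries_iff.mp hw.nodup))
  refine mul_left_cancel₀ hne ?_
  linear_combination hσ - (Equiv.Perm.sign σ : ℂ) * prod_mul_vdm_mul_Hratio ζ hw

theorem IsHFamily.apply_eq_Hratio {ζ : ℂ} {H : (k : ℕ) → (Fin (2 * k) → ℂ) → ℂ}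
    (hH : IsHFamily ζ H) {k : ℕ} {w : Fin (2 * k) → ℂ} (hw : IsGeneric ζ (entries w)) :
    H k w = Hratio ζ k w := by
  have hinj := nodup_entries_iff.mp hw.nodup
  refine hH.2.2 k w ⟨fun i j hij h => hij ?_, fun i j hij h => hij ?_, fun i j =>
    hw.hpol_ne_zero _ (mem_entries_apply w _) _ (mem_entries_apply w _)⟩
  · simpa [Fin.ext_iff] using hinj h
  · simpa [Fin.ext_iff] using hinj h

/-- The prefactor of the determinant ratio, for blocks `a` and `b` of any sizes. -/
def hpolWeight (ζ : ℂ) {m n : ℕ} (a : Fin m → ℂ) (b : Fin n → ℂ) : ℂ :=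
  (∏ i, ∏ j, hpol ζ (a i) (b j)) / (vdm a * vdm b)

/-- The determinant ratio `Hratio` as a function of the two halves of the variables. -/
def halvesRatio (ζ : ℂ) {k : ℕ} (a b : Fin k → ℂ) : ℂ :=
  hpolWeight ζ a b * kernelDet (fun s t => (hpol ζ s t)⁻¹) a b

theorem IsHFamily.apply_eq_halvesRatio {ζ : ℂ} {H : (k : ℕ) → (Fin (2 * k) → ℂ) → ℂ}
    (hH : IsHFamily ζ H) {k : ℕ} {w : Fin (2 * k) → ℂ} (hw : IsGeneric ζ (entries w))
    {a b : Fin k → ℂ} (hab : entries w = entries a + entries b) :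
    H k w = halvesRatio ζ a b := by
  obtain ⟨w', rfl, rfl⟩ := exists_halves_eq a b
  rw [← entries_sumElim, ← comp_halvesEquiv, entries_comp_equiv] at hab
  obtain ⟨σ, rfl⟩ := exists_perm_of_entries_eq hab
  rw [hH.apply_eq_Hratio hw]
  exact Hratio_comp_perm ζ (hab ▸ hw) σ

end Symmetry

section Bilinear

open Matrix

theorem vdm_vecCons {k : ℕ} (x : ℂ) (y : Fin k → ℂ) :
    vdm (vecCons x y) = (∏ i, (y i - x)) * vdm y := by
  simp only [vdm, Fin.prod_univ_succ, cons_val_zero, cons_val_succ, Fin.succ_lt_succ_iff,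
    Fin.succ_pos, if_true, if_false, one_mul, Fin.not_lt_zero]

variable (ζ : ℂ) {m n : ℕ} (v x y u : ℂ) (a : Fin m → ℂ) (b : Fin n → ℂ)

/-- The factor by which `hpolWeight ζ a b` changes when `x` is prepended to `b`. -/
def hpolWeightRatio : ℂ := (∏ i, hpol ζ (a i) x) / ∏ j, (b j - x)

theorem hpolWeight_vecCons_right :
    hpolWeight ζ a (vecCons x b) = hpolWeight ζ a b * hpolWeightRatio ζ x a b := by
  simp only [hpolWeight, hpolWeightRatio, vdm_vecCons, Fin.prod_univ_succ, cons_val_zero,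
    cons_val_succ, Finset.prod_mul_distrib]
  rw [div_mul_div_comm]
  congr 1 <;> ring

theorem hpolWeightRatio_vecCons_left :
    hpolWeightRatio ζ x (vecCons v a) b = hpol ζ v x * hpolWeightRatio ζ x a b := by
  simp only [hpolWeightRatio, Fin.prod_univ_succ, cons_val_zero, cons_val_succ, mul_div_assoc]

theorem hpolWeightRatio_vecCons_right :
    hpolWeightRatio ζ x a (vecCons y b) = hpolWeightRatio ζ x a b / (y - x) := by
  simp only [hpolWeightRatio, Fin.prod_univ_succ, cons_val_zero, cons_val_succ, div_div, mul_comm]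

theorem sub_mul_hpol_mul_halvesRatio_mul_halvesRatio (a : Fin (n + 1) → ℂ) (hxy : x ≠ y) :
    (x - y) * hpol ζ u v * halvesRatio ζ (vecCons v a) (vecCons x (vecCons y b)) *
        halvesRatio ζ a (vecCons u b) =
      -(hpolWeight ζ (vecCons v a) b * hpolWeight ζ a b *
        (hpolWeightRatio ζ x (vecCons v a) b * hpolWeightRatio ζ y (vecCons v a) b *
          hpolWeightRatio ζ u (vecCons v a) b)) *
      (kernelDet (fun s t => (hpol ζ s t)⁻¹) (vecCons v a) (vecCons x (vecCons y b)) *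
        kernelDet (fun s t => (hpol ζ s t)⁻¹) a (vecCons u b)) := by
  have hne : y - x ≠ 0 := sub_ne_zero.mpr hxy.symm
  rw [halvesRatio, halvesRatio, hpolWeight_vecCons_right, hpolWeight_vecCons_right,
    hpolWeight_vecCons_right, hpolWeightRatio_vecCons_right,
    hpolWeightRatio_vecCons_left _ _ u, hpol_comm ζ u v]
  field_simp
  ring

theorem halvesRatio_bilinear (a : Fin (n + 1) → ℂ) (hxy : x ≠ y) (hyu : y ≠ u) (hxu : x ≠ u) :
    (x - y) * hpol ζ u v * halvesRatio ζ (vecCons v a) (vecCons x (vecCons y b)) *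
        halvesRatio ζ a (vecCons u b) +
      (y - u) * hpol ζ x v * halvesRatio ζ (vecCons v a) (vecCons y (vecCons u b)) *
        halvesRatio ζ a (vecCons x b) =
      (x - u) * hpol ζ y v * halvesRatio ζ (vecCons v a) (vecCons x (vecCons u b)) *
        halvesRatio ζ a (vecCons y b) := by
  simp only [sub_mul_hpol_mul_halvesRatio_mul_halvesRatio, hxy, hyu, hxu, ne_eq,
    not_false_eq_true]
  linear_combination (-(hpolWeight ζ (vecCons v a) b * hpolWeight ζ a b *
        (hpolWeightRatio ζ x (vecCons v a) b * hpolWeightRatio ζ y (vecCons v a) b *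
          hpolWeightRatio ζ u (vecCons v a) b))) *
    kernelDet_three_term (fun s t => (hpol ζ s t)⁻¹) v a x y u b

theorem exists_entries_eq_entries_add_entries {k : ℕ} (w : Fin (2 * k + 1) → ℂ) :
    ∃ (a : Fin (k + 1) → ℂ) (b : Fin k → ℂ), entries w = entries a + entries b := by
  let e : Fin (k + 1) ⊕ Fin k ≃ Fin (2 * k + 1) := finSumFinEquiv.trans (finCongr (by omega))
  refine ⟨w ∘ e ∘ Sum.inl, w ∘ e ∘ Sum.inr, ?_⟩
  rw [← entries_sumElim, ← entries_comp_equiv w e, ← Function.comp_assoc,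
    ← Function.comp_assoc, Sum.elim_comp_inl_inr]

variable {ζ x y u v} {H : (k : ℕ) → (Fin (2 * k) → ℂ) → ℂ}

theorem IsHFamily.apply_extL_eq_halvesRatio (hH : IsHFamily ζ H) {k : ℕ} {w : Fin m → ℂ}
    {l : List ℂ} (hlen : 2 * k = m + l.length) (hgen : IsGeneric ζ (entries w + l))
    {a b : Fin k → ℂ} (hab : entries w + l = entries a + entries b) :
    H k (extL w l) = halvesRatio ζ a b := by
  rw [← entries_extL w l hlen] at hgen hab
  exact hH.apply_eq_halvesRatio hgen hab

theorem IsHFamily.bilinear_of_isGeneric (hH : IsHFamily ζ H) {k : ℕ} {w : Fin (2 * k + 1) → ℂ}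
    (hgen : IsGeneric ζ (entries w + {x, y, u, v})) :
    (x - y) * hpol ζ u v * H (k + 2) (extL w [x, y, v]) * H (k + 1) (extL w [u]) +
      (y - u) * hpol ζ x v * H (k + 2) (extL w [y, u, v]) * H (k + 1) (extL w [x]) +
      (u - x) * hpol ζ y v * H (k + 2) (extL w [u, x, v]) * H (k + 1) (extL w [y]) = 0 := by
  obtain ⟨a, b, hab⟩ := exists_entries_eq_entries_add_entries w
  have hsub : ∀ l : List ℂ, l.Subperm [x, y, u, v] → IsGeneric ζ (entries w + l) := fun l hl =>
    hgen.mono (add_le_add_right (Multiset.coe_le.mpr hl) _)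
  have hsmall : ∀ p ∈ [x, y, u, v],
      H (k + 1) (extL w [p]) = halvesRatio ζ a (vecCons p b) := fun p hp =>
    hH.apply_extL_eq_halvesRatio rfl (hsub _ (List.singleton_subperm_iff.mpr hp)) <| by
      rw [hab, entries_vecCons, ← Multiset.singleton_add, Multiset.coe_singleton]
      abel
  have hlarge : ∀ p q r s t, [s, t, v].Sublist [x, y, u, v] → [p, q, r].Perm [s, t, v] →
      H (k + 2) (extL w [p, q, r]) = halvesRatio ζ (vecCons v a) (vecCons s (vecCons t b)) :=
    fun p q r s t hst hperm =>
      hH.apply_extL_eq_halvesRatio rfl (hsub _ (hperm.subperm.trans hst.subperm)) <| by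
        simp only [Multiset.coe_eq_coe.mpr hperm, hab, entries_vecCons, ← Multiset.cons_coe,
          ← Multiset.singleton_add, Multiset.coe_nil]
        abel
  have hnodup : [x, y, u, v].Nodup :=
    Multiset.coe_nodup.mp (Multiset.nodup_of_le (Multiset.le_add_left _ _) hgen.nodup)
  obtain ⟨⟨hxy, hxu, -⟩, ⟨hyu, -⟩, -⟩ := by simpa using hnodup
  rw [hsmall u (by simp), hsmall x (by simp), hsmall y (by simp),
    hlarge x y v x y (by simp) .rfl, hlarge y u v y u (by simp) .rfl,
    hlarge u x v x u (by simp) (.swap _ _ _)]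
  linear_combination halvesRatio_bilinear ζ v x y u b a hxy hyu hxu

end Bilinear

section Density

open Filter

theorem eventually_residual_ne_zero_of_analyticOnNhd {E : Type*} [NormedAddCommGroup E]
    [NormedSpace ℂ E] {f : E → ℂ} (hf : AnalyticOnNhd ℂ f Set.univ) {x₀ : E} (hx₀ : f x₀ ≠ 0) :
    ∀ᶠ x in residual E, f x ≠ 0 := by
  have hopen : IsOpen {x | f x ≠ 0} :=
    isOpen_ne_fun (continuousOn_univ.mp hf.continuousOn) continuous_const
  refine residual_of_dense_open hopen ?_
  refine interior_eq_empty_iff_dense_compl.mp (Set.eq_empty_of_forall_notMem fun x hx => hx₀ ?_)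
  exact hf.eqOn_zero_of_preconnected_of_eventuallyEq_zero isPreconnected_univ (Set.mem_univ x)
    (mem_interior_iff_mem_nhds.mp hx) (Set.mem_univ x₀)

theorem eventually_residual_isGeneric_entries (ζ : ℂ) (ι : Type*) [Fintype ι] :
    ∀ᶠ z in residual (ι → ℂ), IsGeneric ζ (entries z) := by
  classical
  have hcoord : ∀ i, AnalyticOnNhd ℂ (fun z : ι → ℂ => z i) Set.univ := fun i =>
    (ContinuousLinearMap.proj (R := ℂ) (φ := fun _ : ι => ℂ) i).analyticOnNhd _
  have hne : ∀ᶠ z in residual (ι → ℂ), ∀ i, z i ≠ 0 := eventually_all.mpr fun i =>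
    eventually_residual_ne_zero_of_analyticOnNhd (hcoord i) (x₀ := 1) one_ne_zero
  have hinj : ∀ᶠ z in residual (ι → ℂ), ∀ i j, i ≠ j → z i - z j ≠ 0 :=
    eventually_all.mpr fun i => eventually_all.mpr fun j => eventually_all.mpr fun hij =>
      eventually_residual_ne_zero_of_analyticOnNhd ((hcoord i).sub (hcoord j))
        (x₀ := Pi.single i 1) (by simp [hij.symm])
  have hhpol : ∀ᶠ z in residual (ι → ℂ), ∀ i j, hpol ζ (z i) (z j) ≠ 0 :=
    eventually_all.mpr fun i => eventually_all.mpr fun j =>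
      eventually_residual_ne_zero_of_analyticOnNhd (x₀ := 0)
        ((analyticOnNhd_const.sub ((analyticOnNhd_const.mul (hcoord i)).mul (hcoord j))).add
          (((analyticOnNhd_const.mul (hcoord i)).mul (hcoord j)).mul ((hcoord i).add (hcoord j))))
        (by simp [hpol])
  filter_upwards [hne, hinj, hhpol] with z hz hzz hh
  refine ⟨nodup_entries_iff.mpr fun i j hij => ?_, ?_, ?_⟩
  · exact by_contra fun h => hzz i j h (sub_eq_zero.mpr hij)
  · simpa [entries] using hz
  · simpa [entries] using hh

theorem IsHFamily.continuous {ζ : ℂ} {H : (k : ℕ) → (Fin (2 * k) → ℂ) → ℂ}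
    (hH : IsHFamily ζ H) (k : ℕ) : Continuous (H k) := by
  obtain ⟨P, hP⟩ := hH.2.1 k
  simpa only [funext hP] using P.continuous_eval

theorem continuous_extL {ι : Type*} {m n : ℕ} (f : Fin m → ι) (l : List ι) :
    Continuous fun z : ι → ℂ => (extL (z ∘ f) (l.map z) : Fin n → ℂ) := by
  refine continuous_pi fun j => ?_
  by_cases hj : (j : ℕ) < m
  · simp only [extL, hj, dif_pos]
    exact continuous_apply _
  · simp only [extL, hj, dif_neg, not_false_eq_true, List.getD_eq_getElem?_getD, List.getElem?_map]
    cases l[(j : ℕ) - m]? <;> simp only [Option.map_none, Option.map_some, Option.getD] <;>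
      fun_prop

theorem eq_zero_of_continuous_of_isGeneric (ζ : ℂ) {ι : Type*} [Fintype ι] {F : (ι → ℂ) → ℂ}
    (hF : Continuous F) (h : ∀ z, IsGeneric ζ (entries z) → F z = 0) (z : ι → ℂ) : F z = 0 :=
  congrFun (hF.ext_on (dense_of_mem_residual (eventually_residual_isGeneric_entries ζ ι))
    continuous_const h) z

end Density

theorem stmt4 (ζ : ℂ) (H : (k : ℕ) → (Fin (2*k) → ℂ) → ℂ) (hH : IsHFamily ζ H)
    (k : ℕ) (w : Fin (2*k+1) → ℂ) (x y u v : ℂ) :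
    (x - y) * hpol ζ u v * H (k+2) (extL w [x, y, v]) * H (k+1) (extL w [u])
      + (y - u) * hpol ζ x v * H (k+2) (extL w [y, u, v]) * H (k+1) (extL w [x])
      + (u - x) * hpol ζ y v * H (k+2) (extL w [u, x, v]) * H (k+1) (extL w [y]) = 0 := by
  let X : Fin 4 → Fin (2 * k + 1) ⊕ Fin 4 := Sum.inr
  let summand (i j l : Fin 4) (z : Fin (2 * k + 1) ⊕ Fin 4 → ℂ) : ℂ :=
    (z (X i) - z (X j)) * hpol ζ (z (X l)) (z (X 3)) *
      H (k + 2) (extL (z ∘ Sum.inl) ([X i, X j, X 3].map z)) *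
      H (k + 1) (extL (z ∘ Sum.inl) ([X l].map z))
  have hsummand : ∀ i j l, Continuous (summand i j l) := fun i j l => by
    refine .mul (.mul ?_ ((hH.continuous _).comp (continuous_extL _ _)))
      ((hH.continuous _).comp (continuous_extL _ _))
    unfold hpol
    fun_prop
  refine eq_zero_of_continuous_of_isGeneric ζ
    (((hsummand 0 1 2).add (hsummand 1 2 0)).add (hsummand 2 0 1))
    (fun z hz => hH.bilinear_of_isGeneric ?_) (Sum.elim w ![x, y, u, v])
  rw [← Sum.elim_comp_inl_inr z, entries_sumElim] at hz
  exact hz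

end
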